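/- arXiv:1110.6653 — 2 statements merged into one kernel-verified Lean document; each statement's English description precedes it below -/
import Mathlib

section
/- Fix integers n and t with 2 ≤ t < n. Let C ⊆ ℤ/nℤ be a t-sparse set, let A ⊆ {c + t : c ∈ C}, and let W = (⋃_{c ∈ C} F(c)) ∪ A. Then |Ind(W)| = |C| + |{a ∈ A : a + 1 ∉ C}| + t·|{a ∈ A : a + 1 ∈ C}|. -/
/-- The facet `F(i) = {i, i+1, …, i+t-1}` of the path complex `Δ_t(C_n)`
with standard labeling, vertices identified with `ℤ/nℤ`. -/
def facet (n t : ℕ) (i : ZMod n) : Finset (ZMod n) :=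
  (Finset.range t).image (fun r : ℕ => i + (r : ZMod n))

/-- A subset `C` of `ℤ/nℤ` is `t`-sparse if for every `c ∈ C` and every `1 ≤ k ≤ t`
one has `c + k ∉ C`. -/
def TSparse (n t : ℕ) (C : Finset (ZMod n)) : Prop :=
  ∀ c ∈ C, ∀ k : ℕ, 1 ≤ k → k ≤ t → c + (k : ZMod n) ∉ C

/-- `Ind(W) = {j : F(j) ⊆ W}`, the index set of the induced subcollection of
`Δ_t(C_n)` on the vertex set `W`. -/
def indSet (n t : ℕ) (W : Finset (ZMod n)) : Set (ZMod n) :=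
  {j | facet n t j ⊆ W}

/-- In a `t`-sparse set, a vertex `c + r` with `c ∈ C` and `r ≤ t` determines `c` and `r`. -/
theorem TSparse.eq_of_add_eq {n t : ℕ} {C : Finset (ZMod n)} (hC : TSparse n t C)
    {c d : ZMod n} (hc : c ∈ C) (hd : d ∈ C) {r s : ℕ} (hr : r ≤ t) (hs : s ≤ t)
    (h : c + (r : ZMod n) = d + (s : ZMod n)) : c = d ∧ r = s := by
  rcases lt_trichotomy r s with hlt | rfl | hlt
  · refine absurd hc ?_
    have : c = d + ((s - r : ℕ) : ZMod n) := by
      rw [Nat.cast_sub hlt.le]; linear_combination h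
    rw [this]
    exact hC d hd _ (by omega) (by omega)
  · exact ⟨add_right_cancel h, rfl⟩
  · refine absurd hd ?_
    have : d = c + ((r - s : ℕ) : ZMod n) := by
      rw [Nat.cast_sub hlt.le]; linear_combination -h
    rw [this]
    exact hC c hc _ (by omega) (by omega)

/-- The number of indices `r ≤ t` for which the facet `F(c + r)` lies in `W`, for `c ∈ C`. -/
def blockCount (n t : ℕ) (C A : Finset (ZMod n)) (c : ZMod n) : ℕ :=
  1 + (if c + (t : ZMod n) ∈ A ∧ c + (t : ZMod n) + 1 ∉ C then 1 else 0)
    + t * (if c + (t : ZMod n) ∈ A ∧ c + (t : ZMod n) + 1 ∈ C then 1 else 0)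

theorem blockCount_le {n t : ℕ} (ht : 1 ≤ t) (C A : Finset (ZMod n)) (c : ZMod n) :
    blockCount n t C A c ≤ t + 1 := by
  unfold blockCount
  split_ifs <;> grind

/-- Membership in the vertex set `W`, in terms of offsets from elements of `C`. -/
theorem mem_biUnion_facet_union_iff {n t : ℕ} {C A : Finset (ZMod n)}
    (hA : A ⊆ C.image (fun c => c + (t : ZMod n))) (x : ZMod n) :
    x ∈ C.biUnion (facet n t) ∪ A ↔
      ∃ c ∈ C, ∃ r ≤ t, x = c + (r : ZMod n) ∧ (r = t → c + (t : ZMod n) ∈ A) := by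
  simp only [Finset.mem_union, Finset.mem_biUnion, facet, Finset.mem_image, Finset.mem_range]
  constructor
  · rintro (⟨c, hc, r, hr, rfl⟩ | hx)
    · exact ⟨c, hc, r, hr.le, rfl, fun h => absurd h hr.ne⟩
    · obtain ⟨c, hc, rfl⟩ := Finset.mem_image.1 (hA hx)
      exact ⟨c, hc, t, le_rfl, rfl, fun _ => hx⟩
  · rintro ⟨c, hc, r, hr, rfl, h⟩
    rcases hr.lt_or_eq with hr | rfl
    · exact Or.inl ⟨c, hc, r, hr, rfl⟩
    · exact Or.inr (h rfl)

/-- For `c ∈ C` and `r ≤ t`, the vertex `c + r` lies in `W` unless `r = t` and `c + t ∉ A`. -/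
theorem TSparse.add_mem_biUnion_facet_union_iff {n t : ℕ} {C A : Finset (ZMod n)}
    (hC : TSparse n t C) (hA : A ⊆ C.image (fun c => c + (t : ZMod n)))
    {c : ZMod n} (hc : c ∈ C) {r : ℕ} (hr : r ≤ t) :
    c + (r : ZMod n) ∈ C.biUnion (facet n t) ∪ A ↔ (r = t → c + (t : ZMod n) ∈ A) := by
  rw [mem_biUnion_facet_union_iff hA]
  constructor
  · rintro ⟨d, hd, s, hs, h, h'⟩
    obtain ⟨rfl, rfl⟩ := hC.eq_of_add_eq hc hd hr hs h
    exact h'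
  · exact fun h => ⟨c, hc, r, hr, rfl, h⟩

/-- For `c ∈ C`, the vertex `c + t + 1` lies in `W` only if it lies in `C`. -/
theorem TSparse.mem_of_add_succ_mem {n t : ℕ} {C A : Finset (ZMod n)}
    (hC : TSparse n t C) (hA : A ⊆ C.image (fun c => c + (t : ZMod n)))
    {c : ZMod n} (hc : c ∈ C)
    (h : c + (t : ZMod n) + 1 ∈ C.biUnion (facet n t) ∪ A) : c + (t : ZMod n) + 1 ∈ C := by
  obtain ⟨d, hd, s, hs, h, -⟩ := (mem_biUnion_facet_union_iff hA _).1 h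
  rcases s with _ | s
  · rw [h]; simpa using hd
  · have heq : c + (t : ZMod n) = d + (s : ZMod n) := by
      push_cast at h; linear_combination h
    have := (hC.eq_of_add_eq hc hd le_rfl (by omega) heq).2
    omega

/-- For `c ∈ C` and `r ≤ t`, the facet `F(c + r)` lies in `W` iff `r < blockCount n t C A c`. -/
theorem TSparse.add_mem_indSet_iff {n t : ℕ} {C A : Finset (ZMod n)}
    (hC : TSparse n t C) (hA : A ⊆ C.image (fun c => c + (t : ZMod n)))
    {c : ZMod n} (hc : c ∈ C) {r : ℕ} (hr : r ≤ t) :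
    c + (r : ZMod n) ∈ indSet n t (C.biUnion (facet n t) ∪ A) ↔
      r < blockCount n t C A c := by
  have hsub : c + (r : ZMod n) ∈ indSet n t (C.biUnion (facet n t) ∪ A) ↔
      ∀ k < t, c + ((r + k : ℕ) : ZMod n) ∈ C.biUnion (facet n t) ∪ A := by
    simp only [indSet, Set.mem_ofPred_eq, facet, Finset.image_subset_iff, Finset.mem_range,
      Nat.cast_add, add_assoc]
  rw [hsub]
  constructor
  · intro h
    rcases Nat.eq_zero_or_pos r with rfl | hpos
    · unfold blockCount; omega
    have hmem : c + (t : ZMod n) ∈ A := by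
      have := h (t - r) (by omega)
      rw [Nat.add_sub_cancel' hr] at this
      exact (hC.add_mem_biUnion_facet_union_iff hA hc le_rfl).1 this rfl
    by_cases hnext : c + (t : ZMod n) + 1 ∈ C
    · simp [blockCount, hmem, hnext]; omega
    · have : r = 1 := by
        by_contra hne
        have h1 := h (t + 1 - r) (by omega)
        rw [Nat.add_sub_cancel' (by omega), Nat.cast_succ, ← add_assoc] at h1
        exact hnext (hC.mem_of_add_succ_mem hA hc h1)
      simp [blockCount, hmem, hnext, this]
  · intro h k hk
    by_cases hle : r + k ≤ t
    · rw [hC.add_mem_biUnion_facet_union_iff hA hc hle]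
      intro heq
      by_contra hmem
      simp [blockCount, hmem] at h
      omega
    · have hnext : c + (t : ZMod n) + 1 ∈ C := by
        by_contra hnext
        simp only [blockCount, hnext] at h
        split_ifs at h <;> simp_all <;> omega
      have hx : c + ((r + k : ℕ) : ZMod n)
          = (c + (t : ZMod n) + 1) + ((r + k - (t + 1) : ℕ) : ZMod n) := by
        rw [Nat.cast_sub (by omega)]; push_cast; ring
      rw [hx, hC.add_mem_biUnion_facet_union_iff hA hnext (by omega)]
      omega

/-- A subset of the translate `C + t` is counted by the corresponding elements of `C`. -/
theorem card_filter_eq_sum_of_subset_image_add {n t : ℕ} {C A : Finset (ZMod n)}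
    (hA : A ⊆ C.image (fun c => c + (t : ZMod n))) (p : ZMod n → Prop) [DecidablePred p] :
    (A.filter p).card
      = ∑ c ∈ C, if c + (t : ZMod n) ∈ A ∧ p (c + (t : ZMod n)) then 1 else 0 := by
  rw [← Finset.card_filter, ← Finset.card_image_of_injective (C.filter _)
    (add_left_injective (t : ZMod n))]
  congr 1
  ext a
  simp only [Finset.mem_filter, Finset.mem_image]
  constructor
  · rintro ⟨ha, hp⟩
    obtain ⟨c, hc, rfl⟩ := Finset.mem_image.1 (hA ha)
    exact ⟨c, ⟨hc, ha, hp⟩, rfl⟩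
  · rintro ⟨c, ⟨-, h⟩, rfl⟩
    exact h

/-- Iterated form of Lemma 4.5 (used in Proposition 4.8): for a `t`-sparse set `C`,
`A ⊆ {c + t : c ∈ C}` and `W = (⋃_{c ∈ C} F(c)) ∪ A`, one has
`|Ind(W)| = |C| + |{a ∈ A : a + 1 ∉ C}| + t·|{a ∈ A : a + 1 ∈ C}|`. -/
theorem stmt_7 (n t : ℕ) (ht : 2 ≤ t) (htn : t < n)
    (C A : Finset (ZMod n)) (hC : TSparse n t C)
    (hA : A ⊆ C.image (fun c => c + (t : ZMod n))) :
    (indSet n t (C.biUnion (facet n t) ∪ A)).ncard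
      = C.card + (A.filter (fun a => a + 1 ∉ C)).card
          + t * (A.filter (fun a => a + 1 ∈ C)).card := by
  have hlt : ∀ {c : ZMod n} {r : ℕ}, r < blockCount n t C A c → r ≤ t := fun {c r} h => by
    have := blockCount_le (by omega : 1 ≤ t) C A c
    omega
  have hset : indSet n t (C.biUnion (facet n t) ∪ A)
      = ((C.sigma fun c => Finset.range (blockCount n t C A c)).image
          fun x => x.1 + (x.2 : ZMod n) : Finset (ZMod n)) := by
    ext j
    simp only [Finset.coe_image, Set.mem_image, Finset.mem_coe, Finset.mem_sigma,
      Finset.mem_range]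
    constructor
    · intro hj
      have hjW : j ∈ C.biUnion (facet n t) ∪ A :=
        hj (Finset.mem_image.2 ⟨0, Finset.mem_range.2 (by omega), by simp⟩)
      obtain ⟨c, hc, r, hr, rfl, -⟩ := (mem_biUnion_facet_union_iff hA _).1 hjW
      exact ⟨⟨c, r⟩, ⟨hc, (hC.add_mem_indSet_iff hA hc hr).1 hj⟩, rfl⟩
    · rintro ⟨⟨c, r⟩, ⟨hc, hr⟩, rfl⟩
      exact (hC.add_mem_indSet_iff hA hc (hlt hr)).2 hr
  rw [hset, Set.ncard_coe_finset, Finset.card_image_of_injOn, Finset.card_sigma,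
    card_filter_eq_sum_of_subset_image_add hA, card_filter_eq_sum_of_subset_image_add hA]
  · simp only [Finset.card_range, blockCount, Finset.sum_add_distrib, Finset.mul_sum,
      Finset.sum_const, smul_eq_mul, mul_one]
  · rintro ⟨c, r⟩ hx ⟨d, s⟩ hy h
    simp only [Finset.mem_coe, Finset.mem_sigma, Finset.mem_range] at hx hy
    obtain ⟨rfl, rfl⟩ := hC.eq_of_add_eq hx.1 hy.1 (hlt hx.2) (hlt hy.2) h
    rfl
end

section
/- Fix integers n and t with 2 ≤ t < n. Let C and C′ be t-sparse subsets of ℤ/nℤ, let A ⊆ {c + t : c ∈ C} and A′ ⊆ {c + t : c ∈ C′}, and suppose that W := (⋃_{c ∈ C} F(c)) ∪ A = (⋃_{c ∈ C′} F(c)) ∪ A′ and that W ≠ ℤ/nℤ. Then C = C′ and A = A′. -/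
theorem mem_facet {n t : ℕ} {i x : ZMod n} :
    x ∈ facet n t i ↔ ∃ r < t, i + (r : ZMod n) = x := by
  simp [facet]

/-- A `t`-sparse set is determined recursively by the vertex set it generates. -/
theorem TSparse.mem_iff {n t : ℕ} (ht : 0 < t) {C A : Finset (ZMod n)} (hC : TSparse n t C)
    (hA : A ⊆ C.image (fun c => c + (t : ZMod n))) (x : ZMod n) :
    x ∈ C ↔ x ∈ C.biUnion (facet n t) ∪ A ∧
      ∀ k : ℕ, 1 ≤ k → k ≤ t → x - (k : ZMod n) ∉ C := by
  constructor
  · intro hx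
    refine ⟨Finset.mem_union_left _ (Finset.mem_biUnion.2
      ⟨x, hx, mem_facet.2 ⟨0, ht, by simp⟩⟩), fun k h1 h2 hk => ?_⟩
    exact hC _ hk k h1 h2 (by simpa using hx)
  · rintro ⟨hx, hk⟩
    have key : ∃ c ∈ C, ∃ r ≤ t, c + (r : ZMod n) = x := by
      rcases Finset.mem_union.1 hx with h | h
      · obtain ⟨c, hc, hxc⟩ := Finset.mem_biUnion.1 h
        obtain ⟨r, hr, rfl⟩ := mem_facet.1 hxc
        exact ⟨c, hc, r, hr.le, rfl⟩
      · obtain ⟨c, hc, rfl⟩ := Finset.mem_image.1 (hA h)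
        exact ⟨c, hc, t, le_rfl, rfl⟩
    obtain ⟨c, hc, r, hr, rfl⟩ := key
    rcases Nat.eq_zero_or_pos r with rfl | h0
    · simpa using hc
    · exact absurd (by simpa using hc) (hk r h0 hr)

/-- The shifted vertices of a `t`-sparse set lie outside its facets. -/
theorem TSparse.disjoint_biUnion_facet {n t : ℕ} {C A : Finset (ZMod n)} (hC : TSparse n t C)
    (hA : A ⊆ C.image (fun c => c + (t : ZMod n))) :
    Disjoint (C.biUnion (facet n t)) A := by
  rw [Finset.disjoint_left]
  intro a ha haA
  obtain ⟨c, hc, rfl⟩ := Finset.mem_image.1 (hA haA)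
  obtain ⟨d, hd, had⟩ := Finset.mem_biUnion.1 ha
  obtain ⟨r, hr, h⟩ := mem_facet.1 had
  refine hC c hc (t - r) (by omega) (by omega) ?_
  have : c + ((t - r : ℕ) : ZMod n) = d := by
    rw [Nat.cast_sub hr.le]
    linear_combination -h
  rwa [this]

/-- If `w` is not covered by the facets of `C`, no element of `C` lies within distance `t`
before `w + m` unless it comes at or after `w`. -/
theorem sub_notMem_of_notMem_biUnion_facet {n t m k : ℕ} {C : Finset (ZMod n)} {w : ZMod n}
    (hw : w ∉ C.biUnion (facet n t)) (hm : 0 < m) (hmk : m < k) (hk : k ≤ t) :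
    w + (m : ZMod n) - (k : ZMod n) ∉ C := by
  intro h
  refine hw (Finset.mem_biUnion.2 ⟨_, h, mem_facet.2 ⟨k - m, by omega, ?_⟩⟩)
  rw [Nat.cast_sub hmk.le]
  ring

/-- Uniqueness assertion of Proposition 4.9: if two pairs `(C, A)` and `(C', A')`
of a `t`-sparse set together with a subset of its shifted vertices produce the
same vertex set `W ≠ ℤ/nℤ`, then `C = C'` and `A = A'`. -/
theorem stmt_8 (n t : ℕ) (ht : 2 ≤ t) (htn : t < n)
    (C C' A A' : Finset (ZMod n)) (hC : TSparse n t C) (hC' : TSparse n t C')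
    (hA : A ⊆ C.image (fun c => c + (t : ZMod n)))
    (hA' : A' ⊆ C'.image (fun c => c + (t : ZMod n)))
    (hW : C.biUnion (facet n t) ∪ A = C'.biUnion (facet n t) ∪ A')
    (hne : ((C.biUnion (facet n t) ∪ A : Finset (ZMod n)) : Set (ZMod n)) ≠ Set.univ) :
    C = C' ∧ A = A' := by
  have : NeZero n := ⟨by omega⟩
  have ht0 : 0 < t := by omega
  obtain ⟨w, hw⟩ := (Set.ne_univ_iff_exists_notMem _).1 hne
  rw [Finset.mem_coe] at hw
  have hw' := hw
  rw [hW] at hw'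
  have hwC : w ∉ C.biUnion (facet n t) := fun h => hw (Finset.mem_union_left _ h)
  have hwC' : w ∉ C'.biUnion (facet n t) := fun h => hw' (Finset.mem_union_left _ h)
  have key : ∀ m : ℕ, w + (m : ZMod n) ∈ C ↔ w + (m : ZMod n) ∈ C' := by
    intro m
    induction m using Nat.strong_induction_on with
    | _ m ih =>
      rw [hC.mem_iff ht0 hA, hC'.mem_iff ht0 hA', hW]
      rcases Nat.eq_zero_or_pos m with rfl | hm
      · rw [Nat.cast_zero, add_zero]
        exact iff_of_false (fun h => hw' h.1) (fun h => hw' h.1)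
      · refine and_congr_right fun _ => forall_congr' fun k => forall_congr' fun h1 =>
          forall_congr' fun h2 => not_congr ?_
        rcases lt_or_ge m k with hmk | hmk
        · exact iff_of_false (sub_notMem_of_notMem_biUnion_facet hwC hm hmk h2)
            (sub_notMem_of_notMem_biUnion_facet hwC' hm hmk h2)
        · have := ih (m - k) (by omega)
          rwa [Nat.cast_sub hmk, ← add_sub_assoc] at this
  have hCC' : C = C' := by
    ext x
    simpa using key (x - w).val
  subst hCC'
  refine ⟨rfl, ?_⟩
  rw [← Finset.union_sdiff_cancel_left (hC.disjoint_biUnion_facet hA), hW,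
    Finset.union_sdiff_cancel_left (hC.disjoint_biUnion_facet hA')]
end
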